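/- For subsets A ⊆ S ⊆ supp(r̄) and B ⊆ T ⊆ supp(r̄), the intersection of the strata X_{S,A} and X_{T,B} in P(r̄) is: X_{S,A∪B} if S = T; X_{T,S∪B} if S ⊊ T; and Z_{S∪T} = X_{S∪T,S∪T} if S ⊄ T and T ⊄ S. -/

import Mathlib

/-!
Membership of a fixed simplex `σ` in the strata depends only on `W 1 ∪ G 1` and `G 1`. Distributing
`(Y_{S,A} ∪ Z_S) ∩ (Y_{T,B} ∪ Z_T)` gives four pieces, and each is controlled by one observation:
`Y_{S,A} ∩ Y_{T,B}` is empty unless `S = T`, and `Y_{S,A} ∩ Z_T` is empty unless `T ⊆ S`, because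
`T ⊆ G 1 ⊆ W 1 ∪ G 1 = S` (`subset_of_mem_Yset_of_mem_Zset`). The surviving pieces are
`Y_{S,A∪B} ∪ Z_S` when `S = T`, `Y_{T,S∪B} ∪ Z_T` when `S ⊊ T`, and `Z_S ∩ Z_T = Z_{S∪T}` when `S`
and `T` are incomparable.
-/

open Finset

/-- A combinatorial table `((W 0, G 0), …, (W t, G t))` of pairs of finite sets,
normalized so that columns beyond `t` are empty. -/
structure WComb where
  t : ℕ
  W : ℕ → Finset ℕ
  G : ℕ → Finset ℕ
  W_beyond : ∀ i, t < i → W i = ∅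
  G_beyond : ∀ i, t < i → G i = ∅

namespace WComb

/-- Conditions (P1)-(P3) of a witness prestructure. -/
def IsPre (σ : WComb) : Prop :=
  (∀ i, 1 ≤ i → i ≤ σ.t → σ.W i ⊆ σ.W 0 ∧ σ.G i ⊆ σ.W 0) ∧
  (∀ i j, i < j → j ≤ σ.t → Disjoint (σ.G i) (σ.G j)) ∧
  (∀ i j, i ≤ j → j ≤ σ.t → Disjoint (σ.G i) (σ.W j))

/-- A stable witness prestructure: condition (S). -/
def IsStable (σ : WComb) : Prop := σ.IsPre ∧ (1 ≤ σ.t → σ.W σ.t ≠ ∅)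

/-- A witness structure: condition (W). -/
def IsWitness (σ : WComb) : Prop := σ.IsPre ∧ ∀ i, 1 ≤ i → i ≤ σ.t → σ.W i ≠ ∅

/-- The support `W 0 ∪ G 0`. -/
def supp (σ : WComb) : Finset ℕ := σ.W 0 ∪ σ.G 0

/-- The ghost set `G 0 ∪ … ∪ G t`. -/
def ghost (σ : WComb) : Finset ℕ := (Finset.range (σ.t + 1)).biUnion σ.G

/-- The active set. -/
def active (σ : WComb) : Finset ℕ := σ.supp \ σ.ghost

/-- The dimension `|A(σ)| - 1`. -/
def dim (σ : WComb) : ℤ := (σ.active.card : ℤ) - 1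

/-- The increasing list `i₁ < … < i_q` of indices `1 ≤ i ≤ t` with `W i ≠ ∅`. -/
def nzList (σ : WComb) : List ℕ :=
  ((Finset.Icc 1 σ.t).filter (fun i => σ.W i ≠ ∅)).sort (· ≤ ·)

/-- `q`, the number of nonempty columns among `W 1, …, W t`. -/
def q (σ : WComb) : ℕ := σ.nzList.length

/-- `i_k`, with `i_0 = 0`. -/
def cIdx (σ : WComb) (k : ℕ) : ℕ := if k = 0 then 0 else σ.nzList.getD (k - 1) 0

/-- The canonical form `C(σ)`. -/
def canon (σ : WComb) : WComb where
  t := σ.q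
  W := fun k => if k ≤ σ.q then σ.W (σ.cIdx k) else ∅
  G := fun k =>
    if k = 0 then σ.G 0
    else if k ≤ σ.q then (Finset.Ioc (σ.cIdx (k - 1)) (σ.cIdx k)).biUnion σ.G else ∅
  W_beyond := fun i hi => if_neg (Nat.not_le.mpr hi)
  G_beyond := fun i hi => by
    have h0 : i ≠ 0 := by omega
    simp [h0, Nat.not_le.mpr hi]

/-- The truncation index `q = max {0 ≤ i ≤ t | W i ∪ G i ⊄ S ∪ G(σ)}` of stabilization. -/
def stQ (σ : WComb) (S : Finset ℕ) : ℕ :=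
  ((Finset.range (σ.t + 1)).filter (fun i => ¬ (σ.W i ∪ σ.G i ⊆ S ∪ σ.ghost))).sup id

/-- The sets `J i = (W i \ (W (i+1) ∪ … ∪ W q)) ∩ (S ∪ G(σ))`. -/
def Jset (σ : WComb) (S : Finset ℕ) (i : ℕ) : Finset ℕ :=
  (σ.W i \ (Finset.Ioc i (σ.stQ S)).biUnion σ.W) ∩ (S ∪ σ.ghost)

/-- The stabilization `st_S(σ)` in its table form. -/
def st (σ : WComb) (S : Finset ℕ) : WComb where
  t := σ.stQ S
  W := fun k => if k ≤ σ.stQ S then σ.W k \ σ.Jset S k else ∅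
  G := fun k => if k ≤ σ.stQ S then σ.G k ∪ σ.Jset S k else ∅
  W_beyond := fun i hi => if_neg (Nat.not_le.mpr hi)
  G_beyond := fun i hi => if_neg (Nat.not_le.mpr hi)

/-- The ghosting operation `Γ_S(σ) = C(st_S(σ))`. -/
def ghosting (σ : WComb) (S : Finset ℕ) : WComb := (σ.st S).canon

/-- The trace cardinality `M(p, σ) = |{0 ≤ i ≤ t | p ∈ W i ∪ G i}|`. -/
def Mcard (σ : WComb) (p : ℕ) : ℕ :=
  ((Finset.range (σ.t + 1)).filter (fun i => p ∈ σ.W i ∪ σ.G i)).card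

/-- The set of vertices of the simplex indexed by `σ`:
the witness structures `Γ_{A(σ) \ {a}}(σ)`, `a ∈ A(σ)`. -/
def vertexSet (σ : WComb) : Set WComb :=
  {v | ∃ a ∈ σ.active, v = σ.ghosting (σ.active \ {a})}

end WComb

/-- A round counter: a function `ℤ₊ → ℤ₊ ∪ {⊥}` with finite support. -/
structure RC where
  r : ℕ → Option ℕ
  fin : {i | r i ≠ none}.Finite

namespace RC

/-- The support set of a round counter. -/
noncomputable def supp (r : RC) : Finset ℕ := r.fin.toFinset

/-- The value of a round counter at a point of its support. -/
def val (r : RC) (i : ℕ) : ℕ := (r.r i).getD 0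

/-- The active set of a round counter. -/
noncomputable def act (r : RC) : Finset ℕ := r.supp.filter (fun i => 1 ≤ r.val i)

/-- The execution `r̄ ↓ S` of a set `S`. -/
noncomputable def down (r : RC) (S : Finset ℕ) : RC where
  r := fun i => if i ∈ S then (r.r i).map (· - 1) else r.r i
  fin := r.fin.subset (by
    intro i hi
    simp only [Set.mem_setOf_eq] at hi ⊢
    intro h
    apply hi
    simp [h])

/-- The deletion `r̄ \ A` of a set `A`. -/
def del (r : RC) (A : Finset ℕ) : RC where
  r := fun i => if i ∈ A then none else r.r i
  fin := r.fin.subset (by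
    intro i hi
    simp only [Set.mem_setOf_eq] at hi ⊢
    intro h
    apply hi
    simp [h])

/-- `r̄_{S,A} = (r̄ ↓ S) \ A`. -/
noncomputable def exec (r : RC) (S A : Finset ℕ) : RC := (r.down S).del A

end RC

/-- `σ` indexes a simplex of the immediate snapshot complex `P(r̄)`. -/
def IsSimplex (r : RC) (σ : WComb) : Prop :=
  σ.IsWitness ∧ σ.supp = r.supp ∧
  (∀ p ∈ σ.active, σ.Mcard p = r.val p + 1) ∧
  (∀ p ∈ σ.ghost, σ.Mcard p ≤ r.val p + 1)

/-- The stratum `Z_S` of `P(r̄)`: simplices with `S ⊆ G 1`. -/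
def Zset (r : RC) (S : Finset ℕ) : Set WComb :=
  {σ | IsSimplex r σ ∧ S ⊆ σ.G 1}

/-- The stratum `Y_{S,A}` of `P(r̄)`: simplices with `W 1 ∪ G 1 = S` and `A ⊆ G 1`. -/
def Yset (r : RC) (S A : Finset ℕ) : Set WComb :=
  {σ | IsSimplex r σ ∧ σ.W 1 ∪ σ.G 1 = S ∧ A ⊆ σ.G 1}

/-- The stratum `X_{S,A} = Y_{S,A} ∪ Z_S`. -/
def Xset (r : RC) (S A : Finset ℕ) : Set WComb := Yset r S A ∪ Zset r S

theorem Zset_inter_Zset (r : RC) (S T : Finset ℕ) :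
    Zset r S ∩ Zset r T = Zset r (S ∪ T) := by
  ext σ
  simp only [Zset, Set.mem_inter_iff, Set.mem_ofPred_eq, Finset.union_subset_iff]
  tauto

theorem Yset_inter_Zset (r : RC) (S A T : Finset ℕ) :
    Yset r S A ∩ Zset r T = Yset r S (A ∪ T) := by
  ext σ
  simp only [Yset, Zset, Set.mem_inter_iff, Set.mem_ofPred_eq, Finset.union_subset_iff]
  tauto

theorem Yset_inter_Yset_self (r : RC) (S A B : Finset ℕ) :
    Yset r S A ∩ Yset r S B = Yset r S (A ∪ B) := by
  ext σ
  simp only [Yset, Set.mem_inter_iff, Set.mem_ofPred_eq, Finset.union_subset_iff]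
  tauto

theorem eq_of_mem_Yset {r : RC} {S A T B : Finset ℕ} {σ : WComb}
    (h₁ : σ ∈ Yset r S A) (h₂ : σ ∈ Yset r T B) : S = T :=
  h₁.2.1.symm.trans h₂.2.1

theorem subset_of_mem_Yset_of_mem_Zset {r : RC} {S A T : Finset ℕ} {σ : WComb}
    (h₁ : σ ∈ Yset r S A) (h₂ : σ ∈ Zset r T) : T ⊆ S :=
  h₁.2.1 ▸ h₂.2.trans Finset.subset_union_right

theorem Zset_anti (r : RC) {S T : Finset ℕ} (h : S ⊆ T) : Zset r T ⊆ Zset r S :=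
  fun _ hσ => ⟨hσ.1, h.trans hσ.2⟩

theorem Yset_subset_Zset (r : RC) (S A : Finset ℕ) : Yset r S A ⊆ Zset r A :=
  fun _ hσ => ⟨hσ.1, hσ.2.2⟩

/-- intersections of the strata `X_{S,A}` and `X_{T,B}`. -/
theorem Xset_inter (r : RC) (S A T B : Finset ℕ)
    (hA : A ⊆ S) (hS : S ⊆ r.supp) (hB : B ⊆ T) (hT : T ⊆ r.supp) :
    (S = T → Xset r S A ∩ Xset r T B = Xset r S (A ∪ B)) ∧
    (S ⊂ T → Xset r S A ∩ Xset r T B = Xset r T (S ∪ B)) ∧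
    (¬ S ⊆ T → ¬ T ⊆ S →
      Xset r S A ∩ Xset r T B = Zset r (S ∪ T) ∧
      Zset r (S ∪ T) = Xset r (S ∪ T) (S ∪ T)) := by
  refine ⟨?_, ?_, ?_⟩
  · rintro rfl
    rw [Xset, Xset, Xset, ← Set.inter_union_distrib_right, Yset_inter_Yset_self]
  · intro hST
    apply Set.Subset.antisymm
    · rintro σ ⟨h₁ | h₁, h₂ | h₂⟩
      · exact absurd (eq_of_mem_Yset h₁ h₂) hST.ne
      · exact absurd (subset_of_mem_Yset_of_mem_Zset h₁ h₂) hST.not_subset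
      · refine Or.inl ?_
        rw [Finset.union_comm, ← Yset_inter_Zset]
        exact ⟨h₂, h₁⟩
      · exact Or.inr h₂
    · rintro σ (h | h)
      · rw [Finset.union_comm, ← Yset_inter_Zset] at h
        exact ⟨Or.inr h.2, Or.inl h.1⟩
      · exact ⟨Or.inr (Zset_anti r hST.subset h), Or.inr h⟩
  · intro hST hTS
    constructor
    · rw [← Zset_inter_Zset]
      apply Set.Subset.antisymm
      · rintro σ ⟨h₁ | h₁, h₂ | h₂⟩
        · exact absurd (eq_of_mem_Yset h₁ h₂).subset hST
        · exact absurd (subset_of_mem_Yset_of_mem_Zset h₁ h₂) hTS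
        · exact absurd (subset_of_mem_Yset_of_mem_Zset h₂ h₁) hST
        · exact ⟨h₁, h₂⟩
      · exact Set.inter_subset_inter Set.subset_union_right Set.subset_union_right
    · exact (Set.union_eq_self_of_subset_left (Yset_subset_Zset r _ _)).symm
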